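/- Let N and L be positive integers, let c > 0, and for each i ∈ {1, …, L} let b_i > 0 and Ξ(i, 1) ∈ ℝ. Define f : [c, ∞) → ℝ by f(y) = Σ_{i=1}^{L} Ξ(i, 1) exp(−(y−c)/b_i)/b_i, and assume ∫_c^∞ f(y) dy = 1. Then for every x > 0, ∫_c^∞ [γ(N, N x/(2y))/(N−1)!] f(y) dy = 1 − Σ_{n=0}^{N−1} Σ_{i=1}^{L} [Ξ(i, 1)/(n! b_i^{n})] (N x/2)^n e^{c/b_i} Γ(−n+1, c/b_i; N x/(2 b_i)), where γ(s, t) = ∫₀^t u^{s−1} e^{−u} du is the lower incomplete Gamma function and Γ(s, x; B) := ∫_x^∞ t^{s−1} exp(−t − B/t) dt is the extended incomplete Gamma function. -/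

import Mathlib

open MeasureTheory

/-- The extended incomplete Gamma function
`Γ(s, x; B) = ∫ₓ^∞ t ^ (s - 1) exp (-t - B/t) dt`. -/
noncomputable def extGamma (s x B : ℝ) : ℝ :=
  ∫ t in Set.Ioi x, t ^ (s - 1) * Real.exp (-t - B / t)

/-- The lower incomplete Gamma function at a positive integer shape,
`γ(N, t) = ∫₀ᵗ u ^ (N - 1) exp (-u) du`. -/
noncomputable def lowGamma (N : ℕ) (t : ℝ) : ℝ :=
  ∫ u in (0:ℝ)..t, u ^ (N - 1) * Real.exp (-u)

lemma lowGamma_eq (M : ℕ) (t : ℝ) : lowGamma (M + 1) t / (Nat.factorial M : ℝ)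
    = 1 - ∑ n ∈ Finset.range (M + 1), t ^ n / (Nat.factorial n : ℝ) * Real.exp (-t) := by
  have hd : ∀ u : ℝ, HasDerivAt (fun u : ℝ => -∑ n ∈ Finset.range (M + 1),
      u ^ n / (Nat.factorial n : ℝ) * Real.exp (-u))
      (u ^ M * Real.exp (-u) / (Nat.factorial M : ℝ)) u := by
    intro u
    have he : HasDerivAt (fun u : ℝ => Real.exp (-u)) (-Real.exp (-u)) u := by
      simpa using (hasDerivAt_neg u).exp
    induction M with
    | zero => simpa using he.fun_neg
    | succ M ih =>
      have h1 := ((hasDerivAt_pow (M + 1) u).div_const (Nat.factorial (M + 1) : ℝ)).mul he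
      have h2 := ih.sub h1
      refine (h2.congr_deriv ?_).congr_of_eventuallyEq (Filter.Eventually.of_forall ?_)
      · have := Nat.factorial_ne_zero M
        rw [Nat.factorial_succ]
        push_cast
        field_simp
        simp
      · intro v
        simp only [Finset.sum_range_succ _ (M + 1), Pi.sub_apply, Pi.mul_apply]
        ring
  have h := intervalIntegral.integral_eq_sub_of_hasDerivAt (a := 0) (b := t)
    (fun u _ => hd u) (Continuous.intervalIntegrable (by fun_prop) _ _)
  rw [intervalIntegral.integral_div] at h
  simp only [lowGamma, Nat.add_sub_cancel]
  rw [h]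
  have h0 : ∑ n ∈ Finset.range (M + 1), (0:ℝ) ^ n / (Nat.factorial n : ℝ) * Real.exp (-0) = 1 := by
    rw [Finset.sum_range_succ']
    simp
  rw [h0]
  ring

lemma integrable_shift (c b : ℝ) (hb : 0 < b) :
    IntegrableOn (fun y => Real.exp (-(y - c) / b)) (Set.Ioi c) := by
  have h := (integrableOn_exp_mul_Ioi (a := -(1 / b)) (by simpa using hb) c).const_mul
    (Real.exp (c / b))
  refine h.congr (Filter.Eventually.of_forall fun y => ?_)
  simp only
  rw [← Real.exp_add]
  congr 1
  ring

lemma integrable_piece (c b A : ℝ) (hc : 0 < c) (hb : 0 < b) (hA : 0 < A) (n : ℕ) :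
    IntegrableOn (fun y => (A / y) ^ n * Real.exp (-(A / y)) * Real.exp (-(y - c) / b))
      (Set.Ioi c) := by
  refine Integrable.bdd_mul (c := (A / c) ^ n) (integrable_shift c b hb) ?_ ?_
  · exact Measurable.aestronglyMeasurable (by fun_prop)
  · refine (ae_restrict_iff' measurableSet_Ioi).2 (Filter.Eventually.of_forall fun y hy => ?_)
    have hy : c < y := hy
    have hy0 : 0 < y := hc.trans hy
    rw [Real.norm_of_nonneg (by positivity)]
    have h1 : Real.exp (-(A / y)) ≤ 1 := Real.exp_le_one_iff.2 (by
      have : 0 < A / y := by positivity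
      linarith)
    calc (A / y) ^ n * Real.exp (-(A / y)) ≤ (A / y) ^ n * 1 := by gcongr
      _ ≤ (A / c) ^ n := by rw [mul_one]; gcongr

lemma integral_piece (c b A : ℝ) (hc : 0 < c) (hb : 0 < b) (n : ℕ) :
    ∫ y in Set.Ioi c, (A / y) ^ n * Real.exp (-(A / y)) * Real.exp (-(y - c) / b)
      = b * (A ^ n / b ^ n * Real.exp (c / b) * extGamma (-(n : ℝ) + 1) (c / b) (A / b)) := by
  have h := integral_comp_mul_left_Ioi
    (fun y => (A / y) ^ n * Real.exp (-(A / y)) * Real.exp (-(y - c) / b)) (c / b) hb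
  rw [mul_div_cancel₀ _ hb.ne', smul_eq_mul] at h
  have h2 : ∫ y in Set.Ioi c, (A / y) ^ n * Real.exp (-(A / y)) * Real.exp (-(y - c) / b)
      = b * (b⁻¹ * ∫ y in Set.Ioi c, (A / y) ^ n * Real.exp (-(A / y)) *
        Real.exp (-(y - c) / b)) := by
    field_simp
  rw [h2, ← h, extGamma, ← integral_const_mul (A ^ n / b ^ n * Real.exp (c / b))]
  congr 1
  refine setIntegral_congr_fun (s := Set.Ioi (c / b)) measurableSet_Ioi fun t ht => ?_
  have ht0 : 0 < t := (div_pos hc hb).trans ht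
  rw [show -(n : ℝ) + 1 - 1 = -(n : ℝ) by ring, Real.rpow_neg ht0.le, Real.rpow_natCast,
    mul_assoc, ← Real.exp_add]
  rw [show -(A / (b * t)) + -(b * t - c) / b = c / b + (-t - A / b / t) by field_simp; ring,
    Real.exp_add, div_pow, mul_pow]
  field_simp

/-- Special Case 1 (Rayleigh fading) of the paper's Theorem 1: if the conditioning
variance has the mixture-of-shifted-exponentials density
`f y = ∑ i, Ξ i · exp (-(y - c)/bᵢ) / bᵢ` on `[c, ∞)` with `∫_c^∞ f = 1`, then for every
`x > 0` the unconditional CDF `∫_c^∞ γ(N, N x / (2 y)) / (N-1)! · f y dy` of the energy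
test statistic equals the stated closed form. -/
theorem energy_statistic_cdf_rayleigh (N L : ℕ) (hN : 0 < N) (hL : 0 < L)
    (c : ℝ) (hc : 0 < c) (b : Fin L → ℝ) (hb : ∀ i, 0 < b i) (Ξ : Fin L → ℝ)
    (f : ℝ → ℝ)
    (hf : ∀ y, f y = ∑ i : Fin L, Ξ i * Real.exp (-(y - c) / b i) / b i)
    (hf1 : (∫ y in Set.Ioi c, f y) = 1) :
    ∀ x : ℝ, 0 < x →
      (∫ y in Set.Ioi c, (lowGamma N ((N : ℝ) * x / (2 * y))
            / (Nat.factorial (N - 1) : ℝ)) * f y)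
        = 1 - ∑ n ∈ Finset.range N, ∑ i : Fin L,
            (Ξ i / ((Nat.factorial n : ℝ) * (b i) ^ n))
              * ((N : ℝ) * x / 2) ^ n * Real.exp (c / b i)
              * extGamma (-(n : ℝ) + 1) (c / b i) ((N : ℝ) * x / (2 * b i)) := by
  intro x hx
  obtain ⟨M, rfl⟩ : ∃ M, N = M + 1 := ⟨N - 1, by omega⟩
  set A : ℝ := ((M + 1 : ℕ) : ℝ) * x / 2 with hA
  have hApos : 0 < A := by positivity
  have hfi : IntegrableOn f (Set.Ioi c) := by
    by_contra hcon
    rw [integral_undef hcon] at hf1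
    exact zero_ne_one hf1
  have key : ∀ y, (lowGamma (M + 1) (((M + 1 : ℕ) : ℝ) * x / (2 * y))
      / (Nat.factorial (M + 1 - 1) : ℝ)) * f y = f y - ∑ n ∈ Finset.range (M + 1), ∑ i : Fin L,
        (Ξ i / ((Nat.factorial n : ℝ) * b i)) *
          ((A / y) ^ n * Real.exp (-(A / y)) * Real.exp (-(y - c) / b i)) := by
    intro y
    rw [Nat.add_sub_cancel, lowGamma_eq,
      show ((M + 1 : ℕ) : ℝ) * x / (2 * y) = A / y by rw [hA, div_div], sub_mul, one_mul,
      Finset.sum_mul]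
    congr 1
    refine Finset.sum_congr rfl fun n _ => ?_
    rw [hf, Finset.mul_sum]
    refine Finset.sum_congr rfl fun i _ => ?_
    have := (hb i).ne'
    simp only [div_eq_mul_inv, mul_inv]
    ring
  have hint : ∀ n : ℕ, ∀ i : Fin L, IntegrableOn (fun y => (Ξ i / ((Nat.factorial n : ℝ) * b i)) *
      ((A / y) ^ n * Real.exp (-(A / y)) * Real.exp (-(y - c) / b i))) (Set.Ioi c) :=
    fun n i => (integrable_piece c (b i) A hc (hb i) hApos n).const_mul _
  simp_rw [key]
  rw [integral_sub hfi (integrable_finsetSum _ fun n _ => integrable_finsetSum _ fun i _ => hint n i),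
    hf1, integral_finsetSum _ fun n _ => integrable_finsetSum _ fun i _ => hint n i]
  congr 1
  refine Finset.sum_congr rfl fun n _ => ?_
  rw [integral_finsetSum _ fun i _ => hint n i]
  refine Finset.sum_congr rfl fun i _ => ?_
  rw [integral_const_mul, integral_piece c (b i) A hc (hb i),
    show ((M + 1 : ℕ) : ℝ) * x / (2 * b i) = A / b i by rw [hA, div_div]]
  have := (hb i).ne'
  have := Nat.factorial_ne_zero n
  field_simp
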